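/- Let σ : [0,∞) → ℝ be absolutely continuous and suppose that for almost every t, σ'(t)·σ(t) ≤ −c·|σ(t)| with c > 0. Then for all t ≥ 0, |σ(t)| ≤ max(|σ(0)| − c·t, 0). In particular σ(t) = 0 for all t ≥ |σ(0)|/c. -/

import Mathlib

open MeasureTheory intervalIntegral

theorem stepA (σ σ' : ℝ → ℝ) (c : ℝ)
    (hint : ∀ a b : ℝ, 0 ≤ a → a ≤ b → IntervalIntegrable σ' volume a b)
    (hFTC : ∀ a b : ℝ, 0 ≤ a → a ≤ b → σ b - σ a = ∫ t in a..b, σ' t)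
    (hineq : ∀ᵐ t : ℝ, 0 ≤ t → σ' t * σ t ≤ -c * |σ t|)
    (a b : ℝ) (ha : 0 ≤ a) (hab : a ≤ b) (hpos : ∀ x ∈ Set.Ioc a b, 0 < σ x) :
    σ b - σ a ≤ -c * (b - a) := by
  have h1 : (∫ t in a..b, σ' t) ≤ ∫ _t in a..b, -c := by
    rw [integral_of_le hab, integral_of_le hab]
    apply setIntegral_mono_on_ae (hint a b ha hab).1
      (intervalIntegrable_const (μ := volume) (a := a) (b := b) (c := -c)).1 measurableSet_Ioc
    filter_upwards [hineq] with t ht hm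
    have hp := hpos t hm
    have := ht (ha.trans hm.1.le)
    rw [abs_of_pos hp] at this
    exact le_of_mul_le_mul_right this hp
  rw [hFTC a b ha hab]
  rw [intervalIntegral.integral_const, smul_eq_mul] at h1
  linarith

theorem stepB (σ σ' : ℝ → ℝ) (c : ℝ) (hc : 0 < c)
    (hcont : Continuous σ)
    (hint : ∀ a b : ℝ, 0 ≤ a → a ≤ b → IntervalIntegrable σ' volume a b)
    (hFTC : ∀ a b : ℝ, 0 ≤ a → a ≤ b → σ b - σ a = ∫ t in a..b, σ' t)
    (hineq : ∀ᵐ t : ℝ, 0 ≤ t → σ' t * σ t ≤ -c * |σ t|)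
    (t : ℝ) (ht : 0 ≤ t) (hpos : 0 < σ t) : σ t ≤ σ 0 - c * t := by
  have key := stepA σ σ' c hint hFTC hineq
  by_cases hne : (Set.Icc 0 t ∩ {x | σ x ≤ 0}).Nonempty
  · exfalso
    have hK : IsCompact (Set.Icc 0 t ∩ {x | σ x ≤ 0}) :=
      isCompact_Icc.inter_right (isClosed_le hcont continuous_const)
    obtain ⟨s, hs, hmax⟩ := hK.exists_isGreatest hne
    have h := key s t hs.1.1 hs.1.2 (fun x hx => by
      by_contra hcon
      have := hmax ⟨⟨hs.1.1.trans hx.1.le, hx.2⟩, not_lt.mp hcon⟩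
      exact absurd hx.1 (not_lt.mpr this))
    have h2 : σ s ≤ 0 := hs.2
    have h3 : 0 ≤ c * (t - s) := mul_nonneg hc.le (sub_nonneg.mpr hs.1.2)
    linarith
  · have h := key 0 t le_rfl ht (fun x hx => by
      by_contra hcon
      exact hne ⟨x, ⟨hx.1.le, hx.2⟩, not_lt.mp hcon⟩)
    linarith

/-- If `σ` is absolutely continuous with a.e. derivative `σ'` satisfying
`σ'(t)·σ(t) ≤ −c·|σ(t)|` with `c > 0`, then `|σ(t)| ≤ max(|σ(0)| − c·t, 0)` and
in particular `σ(t) = 0` for all `t ≥ |σ(0)|/c`. -/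
theorem stmt2 (σ σ' : ℝ → ℝ) (c : ℝ) (hc : 0 < c)
    (hcont : Continuous σ)
    (hint : ∀ a b : ℝ, 0 ≤ a → a ≤ b → IntervalIntegrable σ' volume a b)
    (hFTC : ∀ a b : ℝ, 0 ≤ a → a ≤ b → σ b - σ a = ∫ t in a..b, σ' t)
    (hineq : ∀ᵐ t : ℝ, 0 ≤ t → σ' t * σ t ≤ -c * |σ t|) :
    (∀ t : ℝ, 0 ≤ t → |σ t| ≤ max (|σ 0| - c * t) 0) ∧
    (∀ t : ℝ, |σ 0| / c ≤ t → σ t = 0) := by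
  have main : ∀ t : ℝ, 0 ≤ t → |σ t| ≤ max (|σ 0| - c * t) 0 := by
    intro t ht
    rcases lt_trichotomy (σ t) 0 with h | h | h
    · have := stepB (fun x => -σ x) (fun x => -σ' x) c hc hcont.neg
        (fun a b ha hab => (hint a b ha hab).neg)
        (fun a b ha hab => by
          rw [intervalIntegral.integral_neg, ← hFTC a b ha hab]; ring)
        (by
          filter_upwards [hineq] with x hx h0
          rw [abs_neg, neg_mul_neg]
          exact hx h0) t ht (neg_pos.mpr h)
      rw [abs_of_neg h]
      apply le_max_of_le_left
      have h2 := neg_le_abs (σ 0)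
      linarith
    · simp [h]
    · have := stepB σ σ' c hc hcont hint hFTC hineq t ht h
      rw [abs_of_pos h]
      apply le_max_of_le_left
      linarith [le_abs_self (σ 0)]
  refine ⟨main, fun t ht => ?_⟩
  have h0 : 0 ≤ t := (div_nonneg (abs_nonneg _) hc.le).trans ht
  have h1 := main t h0
  rw [div_le_iff₀ hc] at ht
  rw [max_eq_right (by linarith)] at h1
  exact abs_nonpos_iff.mp h1
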